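/- The 2-form F = e^{x/2} c(u) du ∧ (−cos(y e^u / 2) dx + e^u sin(y e^u / 2) dy), for an arbitrary smooth function c(u), satisfies the source-free Maxwell equations dF = 0 and d*F = 0 on the four-dimensional type III vacuum Petrov background ds² = 2 du [dr + ½(x r − x e^x) du] + e^x (dx² + e^{2u} dy²), and F is a VSI (indeed universal) Maxwell field: it solves the equations dF = 0, *d*F̃ = 0 of any generalized electrodynamics, where F̃ is any 2-form constructed from F and its covariant derivatives. -/

import Mathlib

open scoped BigOperators

noncomputable section

namespace VSI

/-! ### Basic setup: tensor fields on an `n`-dimensional coordinate chart -/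

/-- A point of an `n`-dimensional coordinate chart. -/
abbrev Pt (n : ℕ) := Fin n → ℝ

/-- A covariant tensor field of rank `k`, given by its components. -/
abbrev TensorField (n k : ℕ) := Pt n → (Fin k → Fin n) → ℝ

/-- A vector field, given by its components. -/
abbrev VecField (n : ℕ) := Pt n → Fin n → ℝ

/-- A field of `n × n` matrices (e.g. a metric). -/
abbrev MetricField (n : ℕ) := Pt n → Matrix (Fin n) (Fin n) ℝ

/-- Partial derivative of a scalar function along the `a`-th coordinate. -/
def pd {n : ℕ} (f : Pt n → ℝ) (a : Fin n) (x : Pt n) : ℝ :=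
  fderiv ℝ f x (Pi.single a 1)

/-- Partial derivative masked to the transverse directions (coordinates `≥ 2`). -/
def pdT {n : ℕ} (f : Pt n → ℝ) (a : Fin n) (x : Pt n) : ℝ :=
  if 2 ≤ (a : ℕ) then pd f a x else 0

/-- A function on the chart is independent of the coordinate `r` (coordinate number 1). -/
def IndepOfR {n : ℕ} {α : Type*} (f : Pt n → α) : Prop :=
  ∀ x x' : Pt n, (∀ i : Fin n, (i : ℕ) ≠ 1 → x i = x' i) → f x = f x'

/-- A smooth symmetric metric of Lorentzian signature `(-,+,…,+)`. -/
def IsLorentzMetric {n : ℕ} (g : MetricField n) : Prop :=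
  (∀ a b, ContDiff ℝ (⊤ : ℕ∞) fun x => g x a b) ∧ (∀ x, (g x).IsSymm) ∧
  (∀ x, ∃ P : Matrix (Fin n) (Fin n) ℝ, IsUnit P.det ∧
    P.transpose * g x * P = Matrix.diagonal fun i : Fin n => if (i : ℕ) = 0 then (-1 : ℝ) else 1)

/-- Metric pairing of two vectors at a point. -/
def gdot {n : ℕ} (g : MetricField n) (x : Pt n) (X Y : Fin n → ℝ) : ℝ :=
  ∑ a, ∑ b, g x a b * X a * Y b

/-- Index lowering of a vector field. -/
def lower {n : ℕ} (g : MetricField n) (ℓ : VecField n) (x : Pt n) (a : Fin n) : ℝ :=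
  ∑ b, g x a b * ℓ x b

/-- The 1-form (rank-1 covariant tensor field) associated with a vector field. -/
def lowerField {n : ℕ} (g : MetricField n) (ℓ : VecField n) : TensorField n 1 :=
  fun x idx => lower g ℓ x (idx 0)

/-- Christoffel symbols `Γ^a_{bc}` of the Levi-Civita connection of `g`. -/
def christoffel {n : ℕ} (g : MetricField n) (x : Pt n) (a b c : Fin n) : ℝ :=
  (1/2) * ∑ d, (g x)⁻¹ a d *
    (pd (fun y => g y d c) b x + pd (fun y => g y b d) c x - pd (fun y => g y b c) d x)

/-- Covariant derivative of a covariant tensor field; the new (derivative) index is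
the first index of the result. -/
def covD {n k : ℕ} (g : MetricField n) (T : TensorField n k) : TensorField n (k+1) :=
  fun x idx =>
    pd (fun y => T y fun m => idx m.succ) (idx 0) x
    - ∑ m : Fin k, ∑ e : Fin n,
        christoffel g x e (idx 0) (idx m.succ) * T x (Function.update (fun m' => idx m'.succ) m e)

/-- Iterated covariant derivative. -/
def covDIter {n k : ℕ} (g : MetricField n) (T : TensorField n k) : (I : ℕ) → TensorField n (k + I)
  | 0 => T
  | I + 1 => covD g (covDIter g T I)

/-! ### Scalar polynomial invariants and tensor concomitants -/

/-- A scheme describing a polynomial concomitant of a rank-`k` tensor field: a full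
metric contraction of a tensor product of covariant derivatives (of orders `ord j`)
of the field, with `r` free indices left over.  `m` is the number of contracted
index pairs; `slots` enumerates all index slots of the tensor product. -/
structure ConcomScheme (k r : ℕ) where
  N : ℕ
  hN : 0 < N
  ord : Fin N → ℕ
  m : ℕ
  slots : ((Fin m × Bool) ⊕ Fin r) ≃ (Σ j : Fin N, Fin (k + ord j))

/-- The value of a concomitant scheme: all contracted index pairs are contracted with
the inverse metric. -/
def ConcomScheme.value {k r : ℕ} (S : ConcomScheme k r) {n : ℕ} (g : MetricField n)
    (T : TensorField n k) : TensorField n r := fun x free =>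
  ∑ φ : Fin S.m × Bool → Fin n,
    (∏ i : Fin S.m, (g x)⁻¹ (φ (i, false)) (φ (i, true))) *
    ∏ j : Fin S.N, covDIter g T (S.ord j) x
      (fun s => Sum.elim φ free (S.slots.symm ⟨j, s⟩))

/-- All scalar polynomial invariants constructed from `T` and its covariant
derivatives up to order `I` vanish. -/
def IsVSIUpTo {n k : ℕ} (g : MetricField n) (T : TensorField n k) (I : ℕ) : Prop :=
  ∀ S : ConcomScheme k 0, (∀ j, S.ord j ≤ I) → ∀ x v, S.value g T x v = 0

/-- All scalar polynomial invariants of arbitrary order vanish. -/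
def IsVSI {n k : ℕ} (g : MetricField n) (T : TensorField n k) : Prop :=
  ∀ I : ℕ, IsVSIUpTo g T I

/-- All zeroth order scalar polynomial invariants of `T` vanish at the point `x`. -/
def IsVSI0At {n k : ℕ} (g : MetricField n) (T : TensorField n k) (x : Pt n) : Prop :=
  ∀ S : ConcomScheme k 0, (∀ j, S.ord j = 0) → ∀ v, S.value g T x v = 0

/-- A rank-`r` tensor field `G` is (polynomially) constructed from `T`, its covariant
derivatives of arbitrary order and the metric. -/
def IsConstructedFrom {n k r : ℕ} (g : MetricField n) (T : TensorField n k)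
    (G : TensorField n r) : Prop :=
  G ∈ Submodule.span ℝ {G' : TensorField n r | ∃ S : ConcomScheme k r, G' = S.value g T}

/-- A symmetric-2-tensor "correction" to the standard electromagnetic energy-momentum
tensor: constructed from `T` and its covariant derivatives, where each monomial either
contains at least three factors of the field or at least one covariant derivative
(i.e. it comes from a non-Maxwellian term of a generalized electrodynamics). -/
def IsCorrectionTensor {n k : ℕ} (g : MetricField n) (T : TensorField n k)
    (Tc : TensorField n 2) : Prop :=
  Tc ∈ Submodule.span ℝ {G : TensorField n 2 |
    ∃ S : ConcomScheme k 2, (3 ≤ S.N ∨ ∃ j, 1 ≤ S.ord j) ∧ G = S.value g T}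

/-! ### p-forms, type N, Lie derivative -/

def IsAlternating {n k : ℕ} (T : TensorField n k) : Prop :=
  ∀ (x : Pt n) (idx : Fin k → Fin n) (σ : Equiv.Perm (Fin k)),
    T x (idx ∘ σ) = ((Equiv.Perm.sign σ : ℤ) : ℝ) * T x idx

def IsSmoothT {n k : ℕ} (T : TensorField n k) : Prop :=
  ∀ idx, ContDiff ℝ (⊤ : ℕ∞) fun x => T x idx

/-- A smooth differential form (totally antisymmetric covariant tensor field). -/
def IsFormField {n k : ℕ} (T : TensorField n k) : Prop :=
  IsSmoothT T ∧ IsAlternating T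

def IsSmoothVec {n : ℕ} (ℓ : VecField n) : Prop :=
  ∀ a, ContDiff ℝ (⊤ : ℕ∞) fun x => ℓ x a

/-- A (nowhere vanishing, smooth) null vector field. -/
def IsNullField {n : ℕ} (g : MetricField n) (ℓ : VecField n) : Prop :=
  IsSmoothVec ℓ ∧ (∀ x, ℓ x ≠ 0) ∧ ∀ x, gdot g x (ℓ x) (ℓ x) = 0

/-- `ℓ^a F_{a b₁ … b_{p-1}} = 0`. -/
def ContractsFirstZero {n p : ℕ} [NeZero p] (ℓ : VecField n) (F : TensorField n p) : Prop :=
  ∀ (x : Pt n) (v : Fin p → Fin n), (∑ a, ℓ x a * F x (Function.update v 0 a)) = 0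

/-- `ℓ_{[a} F_{b₁ … b_p]} = 0`. -/
def WedgeWithZero {n p : ℕ} (g : MetricField n) (ℓ : VecField n) (F : TensorField n p) : Prop :=
  ∀ (x : Pt n) (idx : Fin (p+1) → Fin n),
    (∑ σ : Equiv.Perm (Fin (p+1)), ((Equiv.Perm.sign σ : ℤ) : ℝ) *
      (lower g ℓ x (idx (σ 0)) * F x (fun m => idx (σ m.succ)))) = 0

/-- The `p`-form `F` is of type N with multiple null direction `ℓ`. -/
def IsTypeN {n p : ℕ} [NeZero p] (g : MetricField n) (F : TensorField n p)
    (ℓ : VecField n) : Prop :=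
  IsNullField g ℓ ∧ ContractsFirstZero ℓ F ∧ WedgeWithZero g ℓ F

/-- Lie derivative of a covariant tensor field along a vector field. -/
def lieD {n k : ℕ} (ℓ : VecField n) (T : TensorField n k) : TensorField n k :=
  fun x idx =>
    (∑ a, ℓ x a * pd (fun y => T y idx) a x)
    + ∑ m : Fin k, ∑ a, pd (fun y => ℓ y a) (idx m) x * T x (Function.update idx m a)

/-! ### Optical properties: geodesic, Kundt -/

/-- `∇_b ℓ_a` (first index is the derivative index). -/
def nablaLow {n : ℕ} (g : MetricField n) (ℓ : VecField n) (x : Pt n) (b a : Fin n) : ℝ :=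
  covD g (lowerField g ℓ) x ![b, a]

/-- `ℓ` is geodesic: `ℓ^b ∇_b ℓ_a ∝ ℓ_a`. -/
def IsGeodesicField {n : ℕ} (g : MetricField n) (ℓ : VecField n) : Prop :=
  ∀ x, ∃ c : ℝ, ∀ a, (∑ b, ℓ x b * nablaLow g ℓ x b a) = c * lower g ℓ x a

/-- `ℓ` is affinely parameterized: `ℓ^b ∇_b ℓ_a = 0`. -/
def IsAffinelyParam {n : ℕ} (g : MetricField n) (ℓ : VecField n) : Prop :=
  ∀ x a, (∑ b, ℓ x b * nablaLow g ℓ x b a) = 0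

/-- `ℓ` is a Kundt null vector field: null, geodesic and with vanishing optical matrix
(expansion-free, shear-free and twist-free). -/
def IsKundt {n : ℕ} (g : MetricField n) (ℓ : VecField n) : Prop :=
  IsNullField g ℓ ∧ IsGeodesicField g ℓ ∧
  ∀ (x : Pt n) (X Y : Fin n → ℝ), gdot g x X (ℓ x) = 0 → gdot g x Y (ℓ x) = 0 →
    (∑ a, ∑ b, X a * Y b * nablaLow g ℓ x b a) = 0

/-! ### Curvature -/

/-- Fully lowered Riemann tensor `R_{abcd}`. -/
def riemann {n : ℕ} (g : MetricField n) : TensorField n 4 := fun x idx =>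
  ∑ e, g x (idx 0) e *
    (pd (fun y => christoffel g y e (idx 3) (idx 1)) (idx 2) x
     - pd (fun y => christoffel g y e (idx 2) (idx 1)) (idx 3) x
     + ∑ f', (christoffel g x e (idx 2) f' * christoffel g x f' (idx 3) (idx 1)
            - christoffel g x e (idx 3) f' * christoffel g x f' (idx 2) (idx 1)))

def ricci {n : ℕ} (g : MetricField n) (x : Pt n) (b d : Fin n) : ℝ :=
  ∑ a, ∑ c, (g x)⁻¹ a c * riemann g x ![a, b, c, d]

def ricciScalar {n : ℕ} (g : MetricField n) (x : Pt n) : ℝ :=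
  ∑ b, ∑ d, (g x)⁻¹ b d * ricci g x b d

def tracelessRicci {n : ℕ} (g : MetricField n) : TensorField n 2 := fun x idx =>
  ricci g x (idx 0) (idx 1) - ricciScalar g x / (n : ℝ) * g x (idx 0) (idx 1)

/-- Weyl tensor `C_{abcd}` (for `n ≥ 3`). -/
def weyl {n : ℕ} (g : MetricField n) : TensorField n 4 := fun x idx =>
  riemann g x idx
  - (1 / ((n : ℝ) - 2)) *
      (g x (idx 0) (idx 2) * ricci g x (idx 3) (idx 1)
       - g x (idx 0) (idx 3) * ricci g x (idx 2) (idx 1)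
       - g x (idx 1) (idx 2) * ricci g x (idx 3) (idx 0)
       + g x (idx 1) (idx 3) * ricci g x (idx 2) (idx 0))
  + (1 / (((n : ℝ) - 1) * ((n : ℝ) - 2))) * ricciScalar g x *
      (g x (idx 0) (idx 2) * g x (idx 3) (idx 1) - g x (idx 0) (idx 3) * g x (idx 2) (idx 1))

/-! ### Null frames, boost weights, algebraic types -/

/-- A null frame at a point: two null vectors `e 0 = ℓ`, `e 1 = n` with `ℓ·n = 1`, and
orthonormal spacelike vectors `e i`, `i ≥ 2`, orthogonal to both. -/
structure NullFrameAt {n : ℕ} [NeZero n] (g : MetricField n) (x : Pt n) where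
  e : Fin n → Fin n → ℝ
  h00 : gdot g x (e 0) (e 0) = 0
  h11 : gdot g x (e 1) (e 1) = 0
  h01 : gdot g x (e 0) (e 1) = 1
  h0i : ∀ i : Fin n, 2 ≤ (i : ℕ) → gdot g x (e 0) (e i) = 0
  h1i : ∀ i : Fin n, 2 ≤ (i : ℕ) → gdot g x (e 1) (e i) = 0
  hij : ∀ i j : Fin n, 2 ≤ (i : ℕ) → 2 ≤ (j : ℕ) →
    gdot g x (e i) (e j) = (if i = j then 1 else 0)

/-- Boost weight of a frame multi-index: `+1` for each contraction with `ℓ = e 0`,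
`-1` for each contraction with `n = e 1`. -/
def bw {n k : ℕ} (a : Fin k → Fin n) : ℤ :=
  ((Finset.univ.filter fun m => (a m : ℕ) = 0).card : ℤ)
  - ((Finset.univ.filter fun m => (a m : ℕ) = 1).card : ℤ)

/-- Frame components of a covariant tensor. -/
def frameComp {n k : ℕ} (T : TensorField n k) (e : Fin n → Fin n → ℝ) (x : Pt n)
    (a : Fin k → Fin n) : ℝ :=
  ∑ idx : Fin k → Fin n, T x idx * ∏ m, e (a m) (idx m)

/-- The tensor field `T` has boost order at most `b` with respect to the null
direction `ℓ`: in any null frame containing `ℓ`, all frame components of boost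
weight `> b` vanish.  `b = 0` is the aligned type II condition, `b = -1` type III. -/
def BoostOrderLE {n k : ℕ} [NeZero n] (g : MetricField n) (ℓ : VecField n)
    (T : TensorField n k) (b : ℤ) : Prop :=
  ∀ (x : Pt n) (fr : NullFrameAt g x), fr.e 0 = ℓ x →
    ∀ a : Fin k → Fin n, b < bw a → frameComp T fr.e x a = 0

/-- `g` is a degenerate Kundt metric with Kundt null direction `ℓ`: `ℓ` is Kundt and
the Riemann tensor together with its covariant derivatives of all orders is of aligned
type II with respect to `ℓ`. -/
def IsDegenerateKundt {n : ℕ} [NeZero n] (g : MetricField n) (ℓ : VecField n) : Prop :=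
  IsKundt g ℓ ∧ ∀ I : ℕ, BoostOrderLE g ℓ (covDIter g (riemann g) I) 0

/-! ### Exterior derivative, Hodge dual, Maxwell equations -/

/-- Exterior derivative (components, no normalization factor). -/
def extD {n k : ℕ} (F : TensorField n k) : TensorField n (k+1) := fun x idx =>
  ∑ m : Fin (k+1), (-1 : ℝ) ^ (m : ℕ) *
    pd (fun y => F y fun i => idx (m.succAbove i)) (idx m) x

/-- Sign of a self-map of `Fin k` (0 if not bijective). -/
def permSign {k : ℕ} (f : Fin k → Fin k) : ℤ :=
  if h : Function.Bijective f then Equiv.Perm.sign (Equiv.ofBijective f h) else 0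

/-- Raise all indices of a covariant tensor with the inverse metric. -/
def raiseAll {n k : ℕ} (g : MetricField n) (T : TensorField n k) : TensorField n k :=
  fun x idx => ∑ jdx : Fin k → Fin n, (∏ m, (g x)⁻¹ (idx m) (jdx m)) * T x jdx

/-- Hodge dual of a `p`-form (`p + q = n`), via the metric volume element
`√|det g| ε_{a₁…aₙ}`. -/
def hodge {n p q : ℕ} (h : p + q = n) (g : MetricField n) (F : TensorField n p) :
    TensorField n q := fun x idx =>
  (1 / (Nat.factorial p : ℝ)) *
    ∑ a : Fin p → Fin n, raiseAll g F x a *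
      (Real.sqrt |(g x).det| *
        ((permSign fun i => Fin.append a idx (Fin.cast h.symm i) : ℤ) : ℝ))

/-- Source-free Maxwell equations `dF = 0 = d*F` for a `p`-form (`p + q = n`). -/
def MaxwellEqs {n p q : ℕ} (h : p + q = n) (g : MetricField n) (F : TensorField n p) : Prop :=
  (∀ x idx, extD F x idx = 0) ∧ (∀ x idx, extD (hodge h g F) x idx = 0)

/-! ### Wedge products -/

def wedgeP {n a b : ℕ} (F : TensorField n a) (G : TensorField n b) : TensorField n (a+b) :=
  fun x idx => ∑ σ : Equiv.Perm (Fin (a+b)), ((Equiv.Perm.sign σ : ℤ) : ℝ) *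
    (F x fun i => idx (σ (Fin.castAdd b i))) * (G x fun j => idx (σ (Fin.natAdd a j)))

def wedgePow {n p : ℕ} (F : TensorField n p) : (k : ℕ) → TensorField n (p * k)
  | 0 => fun _ _ => 1
  | k + 1 => wedgeP (wedgePow F k) F

def castT {n a b : ℕ} (h : a = b) (T : TensorField n a) : TensorField n b :=
  fun x idx => T x fun i => idx (Fin.cast h i)

/-! ### Degenerate Kundt metrics in adapted coordinates -/

/-- The Kundt metric `ds² = 2 du (dr + H du + W_α dx^α) + g_{αβ} dx^α dx^β` in
coordinates `(u, r, x^α) = (x⁰, x¹, x^{α≥2})`. -/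
def kundtMetric {n : ℕ} (H : Pt n → ℝ) (W : Pt n → Fin n → ℝ) (hT : MetricField n) :
    MetricField n := fun x => Matrix.of fun a b =>
  if (a : ℕ) = 0 ∧ (b : ℕ) = 0 then 2 * H x
  else if ((a : ℕ) = 0 ∧ (b : ℕ) = 1) ∨ ((a : ℕ) = 1 ∧ (b : ℕ) = 0) then 1
  else if (a : ℕ) = 0 then W x b
  else if (b : ℕ) = 0 then W x a
  else if (a : ℕ) = 1 ∨ (b : ℕ) = 1 then 0
  else hT x a b

/-- A transverse (Riemannian) metric `g_{αβ}(u,x)`, stored as an `n×n` matrix padded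
by the identity on the coordinates `u, r`. -/
def IsTransverseMetric {n : ℕ} (hT : MetricField n) : Prop :=
  (∀ (x : Pt n) (a b : Fin n), ((a : ℕ) < 2 ∨ (b : ℕ) < 2) → hT x a b = (if a = b then 1 else 0)) ∧
  (∀ x, (hT x).IsSymm) ∧ (∀ a b, ContDiff ℝ (⊤ : ℕ∞) fun x => hT x a b) ∧
  IndepOfR hT ∧ (∀ x, (hT x).PosDef)

/-- Data of a degenerate Kundt metric: `W_α = r W¹_α + W⁰_α`,
`H = r² H² + r H¹ + H⁰`, transverse metric `hT`. -/
structure DegKundtData (n : ℕ) where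
  H2 : Pt n → ℝ
  H1 : Pt n → ℝ
  H0 : Pt n → ℝ
  W1 : Pt n → Fin n → ℝ
  W0 : Pt n → Fin n → ℝ
  hT : MetricField n

def DegKundtData.Hfun {n : ℕ} [NeZero n] (D : DegKundtData n) : Pt n → ℝ :=
  fun z => (z 1)^2 * D.H2 z + z 1 * D.H1 z + D.H0 z

def DegKundtData.Wfun {n : ℕ} [NeZero n] (D : DegKundtData n) : Pt n → Fin n → ℝ :=
  fun z b => z 1 * D.W1 z b + D.W0 z b

/-- The degenerate Kundt metric built from the data. -/
def DegKundtData.metric {n : ℕ} [NeZero n] (D : DegKundtData n) : MetricField n :=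
  kundtMetric D.Hfun D.Wfun D.hT

/-- Regularity and shape conditions on the degenerate Kundt data: the metric functions
depend only on `(u, x^α)` and are smooth, `W`'s are transverse. -/
def DegKundtData.Regular {n : ℕ} (D : DegKundtData n) : Prop :=
  IsTransverseMetric D.hT ∧
  IndepOfR D.H2 ∧ IndepOfR D.H1 ∧ IndepOfR D.H0 ∧ IndepOfR D.W1 ∧ IndepOfR D.W0 ∧
  ContDiff ℝ (⊤ : ℕ∞) D.H2 ∧ ContDiff ℝ (⊤ : ℕ∞) D.H1 ∧ ContDiff ℝ (⊤ : ℕ∞) D.H0 ∧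
  (∀ a, ContDiff ℝ (⊤ : ℕ∞) fun x => D.W1 x a) ∧ (∀ a, ContDiff ℝ (⊤ : ℕ∞) fun x => D.W0 x a) ∧
  (∀ (x : Pt n) (a : Fin n), (a : ℕ) < 2 → D.W1 x a = 0) ∧ (∀ (x : Pt n) (a : Fin n), (a : ℕ) < 2 → D.W0 x a = 0)

/-- The `(q+1)`-form `du ∧ f` built from a transverse `q`-form `f`. -/
def duWedge {n q : ℕ} (f : TensorField n q) : TensorField n (q+1) := fun x idx =>
  ∑ m : Fin (q+1), (-1 : ℝ) ^ (m : ℕ) * (if (idx m : ℕ) = 0 then 1 else 0) *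
    f x (fun i => idx (m.succAbove i))

/-- `f_{[α₂…α_p , α₁]} = 0`: `f` is closed in the transverse geometry. -/
def TransClosed {n q : ℕ} (f : TensorField n q) : Prop :=
  ∀ (x : Pt n) (v : Fin (q+1) → Fin n), (∀ i, 2 ≤ (v i : ℕ)) →
    (∑ m : Fin (q+1), (-1 : ℝ) ^ (m : ℕ) *
      pd (fun y => f y fun i => v (m.succAbove i)) (v m) x) = 0

/-- `(√g̃ f^{β α₁…α_{p-2}})_{,β} = 0`: `f` is co-closed in the transverse geometry. -/
def TransCoclosed {n q : ℕ} [NeZero q] (hT : MetricField n) (f : TensorField n q) : Prop :=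
  ∀ (x : Pt n) (v : Fin q → Fin n),
    (∑ b : Fin n, pd (fun y =>
      Real.sqrt (hT y).det * raiseAll hT f y (Function.update v 0 b)) b x) = 0

/-! ### Transverse curvature -/

def christoffelT {n : ℕ} (h : MetricField n) (x : Pt n) (a b c : Fin n) : ℝ :=
  (1/2) * ∑ d, (h x)⁻¹ a d *
    (pdT (fun y => h y d c) b x + pdT (fun y => h y b d) c x - pdT (fun y => h y b c) d x)

def covDT {n k : ℕ} (h : MetricField n) (T : TensorField n k) : TensorField n (k+1) :=
  fun x idx =>
    pdT (fun y => T y fun m => idx m.succ) (idx 0) x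
    - ∑ m : Fin k, ∑ e : Fin n,
        christoffelT h x e (idx 0) (idx m.succ) * T x (Function.update (fun m' => idx m'.succ) m e)

def riemannT {n : ℕ} (h : MetricField n) : TensorField n 4 := fun x idx =>
  ∑ e, h x (idx 0) e *
    (pdT (fun y => christoffelT h y e (idx 3) (idx 1)) (idx 2) x
     - pdT (fun y => christoffelT h y e (idx 2) (idx 1)) (idx 3) x
     + ∑ f', (christoffelT h x e (idx 2) f' * christoffelT h x f' (idx 3) (idx 1)
            - christoffelT h x e (idx 3) f' * christoffelT h x f' (idx 2) (idx 1)))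

def ricciT {n : ℕ} (h : MetricField n) (x : Pt n) (b d : Fin n) : ℝ :=
  ∑ a, ∑ c, (h x)⁻¹ a c * riemannT h x ![a, b, c, d]

def ricciScalarT {n : ℕ} (h : MetricField n) (x : Pt n) : ℝ :=
  ∑ b, ∑ d, (h x)⁻¹ b d * ricciT h x b d

/-- A covector field as a rank-1 tensor field. -/
def oneForm {n : ℕ} (W : Pt n → Fin n → ℝ) : TensorField n 1 := fun x idx => W x (idx 0)

/-- Transverse covariant derivative `∇̃_b V_a` (`= V_{a||b}`). -/
def nablaT {n : ℕ} (h : MetricField n) (V : TensorField n 1) (x : Pt n) (b a : Fin n) : ℝ :=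
  covDT h V x ![b, a]

/-- Second transverse covariant derivative `∇̃_c ∇̃_b V_a`. -/
def nablaT2 {n : ℕ} (h : MetricField n) (V : TensorField n 1) (x : Pt n) (c b a : Fin n) : ℝ :=
  covDT h (covDT h V) x ![c, b, a]

/-- Transverse divergence `V^{α}{}_{||α}`. -/
def divT {n : ℕ} (h : MetricField n) (V : TensorField n 1) (x : Pt n) : ℝ :=
  ∑ b, ∑ c, (h x)⁻¹ b c * nablaT h V x b c

def gradT {n : ℕ} (f : Pt n → ℝ) : TensorField n 1 := fun x idx => pdT f (idx 0) x

/-- Transverse Laplacian. -/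
def laplaceT {n : ℕ} (h : MetricField n) (f : Pt n → ℝ) (x : Pt n) : ℝ :=
  ∑ a, ∑ b, (h x)⁻¹ a b * covDT h (gradT f) x ![a, b]

def lnSqrtDet {n : ℕ} (h : MetricField n) (y : Pt n) : ℝ :=
  Real.log (Real.sqrt (h y).det)

/-! ### Electromagnetic energy-momentum tensor -/

/-- Standard energy-momentum tensor of a `(q+1)`-form Maxwell field:
`T_{ab} = (1/q!) (F_{a c⃗} F_b{}^{c⃗} - (1/(2(q+1))) g_{ab} F_{c⃗}F^{c⃗})`. -/
def emTensor {n q : ℕ} (g : MetricField n) (F : TensorField n (q+1)) (x : Pt n)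
    (a b : Fin n) : ℝ :=
  (1 / (Nat.factorial q : ℝ)) *
    ((∑ v : Fin q → Fin n, F x (Fin.cons a v) *
        ∑ w : Fin q → Fin n, (∏ i, (g x)⁻¹ (v i) (w i)) * F x (Fin.cons b w))
     - (1 / (2 * ((q : ℝ) + 1))) * g x a b *
        ∑ v : Fin (q+1) → Fin n, F x v * raiseAll g F x v)

/-! ### Coordinate transformations (for adapted coordinates) -/

/-- Jacobian `∂ψ^a/∂y^b` of a coordinate change. -/
def jac {n : ℕ} (ψ : Pt n → Pt n) (y : Pt n) (a b : Fin n) : ℝ :=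
  pd (fun z => ψ z a) b y

/-- Pullback of the metric along the coordinate change `ψ` (from new to old coords). -/
def pullMetric {n : ℕ} (g : MetricField n) (ψ : Pt n → Pt n) : MetricField n :=
  fun y => Matrix.of fun μ ν => ∑ a, ∑ b, jac ψ y a μ * jac ψ y b ν * g (ψ y) a b

/-- Pullback of a covariant tensor field along `ψ`. -/
def pullForm {n p : ℕ} (F : TensorField n p) (ψ : Pt n → Pt n) : TensorField n p :=
  fun y idx => ∑ jdx : Fin p → Fin n, (∏ m, jac ψ y (jdx m) (idx m)) * F (ψ y) jdx

/-! ### Parallelly transported adapted frames -/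

/-- A null frame field containing `ℓ`, parallelly transported along `ℓ` and adapted
(`M^i_{jk} = 0`). -/
structure AdaptedPTFrame {n : ℕ} [NeZero n] (g : MetricField n) (ℓ : VecField n) where
  fr : ∀ x : Pt n, NullFrameAt g x
  aligned : ∀ x, (fr x).e 0 = ℓ x
  parallel : ∀ (x : Pt n) (a c : Fin n),
    (∑ b, ℓ x b * (pd (fun y => (fr y).e a c) b x
      + ∑ d, christoffel g x c b d * (fr x).e a d)) = 0
  adapted : ∀ (x : Pt n) (i j k : Fin n), 2 ≤ (i : ℕ) → 2 ≤ (j : ℕ) → 2 ≤ (k : ℕ) →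
    (∑ a, ∑ b, covD g (lowerField g fun z => (fr z).e j) x ![b, a]
      * (fr x).e i a * (fr x).e k b) = 0

/-! ### Explicit Petrov type III solutions -/

/-- The type III vacuum metric of Petrov,
`ds² = 2 du (dr + ½(xr − x eˣ) du) + eˣ(dx² + e^{2u} dy²)`, in coordinates
`(u,r,x,y)`. -/
def petrovG : MetricField 4 := fun z => Matrix.of fun a b =>
  if a = 0 ∧ b = 0 then z 2 * z 1 - z 2 * Real.exp (z 2)
  else if (a = 0 ∧ b = 1) ∨ (a = 1 ∧ b = 0) then 1
  else if a = 2 ∧ b = 2 then Real.exp (z 2)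
  else if a = 3 ∧ b = 3 then Real.exp (z 2 + 2 * z 0)
  else 0

/-- The same metric with the electromagnetic backreaction term
`−2κ₀ eˣ c(u)²` included in `2H`. -/
def petrovEM (κ₀ : ℝ) (c : ℝ → ℝ) : MetricField 4 := fun z => Matrix.of fun a b =>
  if a = 0 ∧ b = 0 then z 2 * z 1 - z 2 * Real.exp (z 2) - 2 * κ₀ * Real.exp (z 2) * (c (z 0))^2
  else if (a = 0 ∧ b = 1) ∨ (a = 1 ∧ b = 0) then 1
  else if a = 2 ∧ b = 2 then Real.exp (z 2)
  else if a = 3 ∧ b = 3 then Real.exp (z 2 + 2 * z 0)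
  else 0

/-- The null direction `ℓ = ∂_r`. -/
def ellR : VecField 4 := fun _ a => if a = 1 then 1 else 0

/-- The transverse covector of the VSI Maxwell field (4). -/
def petrovA (c : ℝ → ℝ) (z : Pt 4) : Fin 4 → ℝ := fun a =>
  if a = 2 then -(Real.exp (z 2 / 2) * c (z 0) * Real.cos (z 3 * Real.exp (z 0) / 2))
  else if a = 3 then Real.exp (z 2 / 2) * c (z 0) * Real.exp (z 0) * Real.sin (z 3 * Real.exp (z 0) / 2)
  else 0

/-- The Maxwell 2-form
`F = e^{x/2} c(u) du ∧ (−cos(y eᵘ/2) dx + eᵘ sin(y eᵘ/2) dy)`. -/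
def petrovF (c : ℝ → ℝ) : TensorField 4 2 := fun z idx =>
  (if idx 0 = 0 then petrovA c z (idx 1) else 0)
  - (if idx 1 = 0 then petrovA c z (idx 0) else 0)

/-!
Grade a coordinate component of a tensor field by its degree in `r` against the boost weight of its
indices: an index `u` allows one more power of `r`, an index `r` one less.  The Petrov metric and
its inverse have order `0` for the resulting filtration, so covariant differentiation preserves
orders and a contracted product of factors has at least the sum of their orders.  A component whose
allowed degree is negative vanishes.

The field `F` has order `1`.  A scalar invariant therefore has positive order, and since scalars
have weight `0` it vanishes.  Moreover `∇F` has order `2`, so a concomitant of `F` of rank two is a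
multiple of `F` up to terms of order `2`; an alternating tensor has no nonzero component of weight
above `1`, so a `2`-form constructed from `F` is exactly a constant multiple of `F`.  It remains to
check Maxwell's equations for `F = du ∧ A` and `*F = du ∧ ⋆A`, which say that `A` and `⋆A` are
closed in the transverse directions.
-/

/-! ### Partial derivatives -/

section PartialDerivatives

variable {n : ℕ} {f h : Pt n → ℝ} {x : Pt n}

lemma pd_const (t : ℝ) (b : Fin n) (x : Pt n) : pd (fun _ => t) b x = 0 := by
  simp [pd]

lemma pd_coord (i b : Fin n) (x : Pt n) : pd (fun y => y i) b x = if i = b then 1 else 0 := by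
  have hproj : (fun y : Pt n => y i) = ContinuousLinearMap.proj (R := ℝ) i := rfl
  simp [pd, hproj, ContinuousLinearMap.fderiv, Pi.single_apply]

lemma pd_neg (f : Pt n → ℝ) (b : Fin n) (x : Pt n) : pd (fun y => -f y) b x = -pd f b x := by
  simp [pd, fderiv_fun_neg]

lemma pd_const_mul (t : ℝ) (f : Pt n → ℝ) (b : Fin n) (x : Pt n) :
    pd (fun y => t * f y) b x = t * pd f b x := by
  change fderiv ℝ (t • f) x (Pi.single b 1) = t * fderiv ℝ f x (Pi.single b 1)
  rw [fderiv_const_smul_field]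
  rfl

lemma pd_div_const (f : Pt n → ℝ) (t : ℝ) (b : Fin n) (x : Pt n) :
    pd (fun y => f y / t) b x = pd f b x / t := by
  simpa only [div_eq_inv_mul] using pd_const_mul t⁻¹ f b x

lemma pd_add (hf : DifferentiableAt ℝ f x) (hh : DifferentiableAt ℝ h x) (b : Fin n) :
    pd (fun y => f y + h y) b x = pd f b x + pd h b x := by
  simp [pd, fderiv_fun_add hf hh]

lemma pd_sub (hf : DifferentiableAt ℝ f x) (hh : DifferentiableAt ℝ h x) (b : Fin n) :
    pd (fun y => f y - h y) b x = pd f b x - pd h b x := by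
  simp [pd, fderiv_fun_sub hf hh]

lemma pd_mul (hf : DifferentiableAt ℝ f x) (hh : DifferentiableAt ℝ h x) (b : Fin n) :
    pd (fun y => f y * h y) b x = f x * pd h b x + h x * pd f b x := by
  simp [pd, fderiv_fun_mul hf hh]

lemma pd_comp {φ : ℝ → ℝ} (hφ : DifferentiableAt ℝ φ (f x)) (hf : DifferentiableAt ℝ f x)
    (b : Fin n) : pd (fun y => φ (f y)) b x = deriv φ (f x) * pd f b x := by
  have hcomp := (hφ.hasDerivAt.comp_hasFDerivAt x hf.hasFDerivAt).fderiv
  simpa [pd, Function.comp_def] using congrArg (· (Pi.single b 1)) hcomp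

lemma pd_exp (hf : DifferentiableAt ℝ f x) (b : Fin n) :
    pd (fun y => Real.exp (f y)) b x = Real.exp (f x) * pd f b x := by
  rw [pd_comp Real.differentiableAt_exp hf, Real.deriv_exp]

lemma pd_sin (hf : DifferentiableAt ℝ f x) (b : Fin n) :
    pd (fun y => Real.sin (f y)) b x = Real.cos (f x) * pd f b x := by
  rw [pd_comp Real.differentiableAt_sin hf, Real.deriv_sin]

lemma pd_cos (hf : DifferentiableAt ℝ f x) (b : Fin n) :
    pd (fun y => Real.cos (f y)) b x = -Real.sin (f x) * pd f b x := by
  rw [pd_comp Real.differentiableAt_cos hf, Real.deriv_cos]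

lemma contDiff_pd (hf : ContDiff ℝ (⊤ : ℕ∞) f) (b : Fin n) :
    ContDiff ℝ (⊤ : ℕ∞) fun x => pd f b x :=
  (hf.fderiv_right (m := ((⊤ : ℕ∞) : WithTop ℕ∞)) (by simp)).clm_apply contDiff_const

lemma IndepOfR.add_eq (hf : IndepOfR f) (x : Pt n) {v : Pt n}
    (hv : ∀ i : Fin n, (i : ℕ) ≠ 1 → v i = 0) : f (x + v) = f x :=
  hf _ _ fun i hi => by simp [hv i hi]

lemma IndepOfR.pd (hf : IndepOfR f) (b : Fin n) : IndepOfR fun x => pd f b x := by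
  intro x x' hxx'
  have htranslate : (fun y => f (y + (x' - x))) = f :=
    funext fun y => hf.add_eq y fun i hi => by simp [hxx' i hi]
  have hfderiv : fderiv ℝ f x = fderiv ℝ f x' := by
    conv_lhs => rw [← htranslate, fderiv_comp_add_right, add_sub_cancel]
  simp only [VSI.pd, hfderiv]

lemma pd_eq_zero_of_indepOfR (hf : IndepOfR f) {b : Fin n} (hb : (b : ℕ) = 1) (x : Pt n) :
    pd f b x = 0 := by
  by_cases hd : DifferentiableAt ℝ f x
  · have hline : (fun t : ℝ => f (x + t • Pi.single b 1)) = fun _ => f x :=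
      funext fun t => hf.add_eq x fun i hi => by
        simp [show i ≠ b from fun hib => hi (hib ▸ hb)]
    have hderiv := hd.hasFDerivAt.hasLineDerivAt (Pi.single b (1 : ℝ))
    unfold HasLineDerivAt at hderiv
    rw [hline] at hderiv
    exact hderiv.unique (hasDerivAt_const _ _)
  · simp [pd, fderiv_zero_of_not_differentiableAt hd]

end PartialDerivatives

/-! ### Polynomials in `r` -/

/-- The boost weight of a single coordinate index: `1` for `u`, `-1` for `r` and `0` for the
transverse coordinates, so that `bw` is the sum of the weights of its indices. -/
def indexBw {n : ℕ} (a : Fin n) : ℤ := if (a : ℕ) = 0 then 1 else if (a : ℕ) = 1 then -1 else 0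

section DegreeInR

variable {n : ℕ} [n.AtLeastTwo] {d e : ℤ} {f h : Pt n → ℝ}

lemma val_one_of_atLeastTwo : ((1 : Fin n) : ℕ) = 1 := by
  rw [Fin.val_one', Nat.mod_eq_of_lt Nat.AtLeastTwo.one_lt]

/-- The functions that are polynomial of degree at most `d` in the coordinate `r = x 1`, with
smooth `r`-independent coefficients.  The degree is an integer, and only `0` has negative degree. -/
def degreeRLE (n : ℕ) [n.AtLeastTwo] (d : ℤ) : Submodule ℝ (Pt n → ℝ) :=
  Submodule.span ℝ {f | ∃ (a : Pt n → ℝ) (i : ℕ), ContDiff ℝ (⊤ : ℕ∞) a ∧ IndepOfR a ∧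
    (i : ℤ) ≤ d ∧ f = fun x => a x * x 1 ^ i}

lemma mul_pow_mem_degreeRLE {a : Pt n → ℝ} {i : ℕ} (ha : ContDiff ℝ (⊤ : ℕ∞) a)
    (hr : IndepOfR a) (hi : (i : ℤ) ≤ d) : (fun x => a x * x 1 ^ i) ∈ degreeRLE n d :=
  Submodule.subset_span ⟨a, i, ha, hr, hi, rfl⟩

lemma IndepOfR.mem_degreeRLE (hr : IndepOfR f) (hf : ContDiff ℝ (⊤ : ℕ∞) f) (hd : 0 ≤ d) :
    f ∈ degreeRLE n d := by
  simpa using mul_pow_mem_degreeRLE (i := 0) hf hr hd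

lemma const_mem_degreeRLE (t : ℝ) (hd : 0 ≤ d) : (fun _ => t) ∈ degreeRLE n d :=
  IndepOfR.mem_degreeRLE (fun _ _ _ => rfl) contDiff_const hd

lemma zero_mem_degreeRLE : (fun _ => 0) ∈ degreeRLE n d := (degreeRLE n d).zero_mem

lemma degreeRLE_mono (hde : d ≤ e) : degreeRLE n d ≤ degreeRLE n e :=
  Submodule.span_mono fun _ ⟨a, i, ha, hr, hi, hf⟩ => ⟨a, i, ha, hr, hi.trans hde, hf⟩

lemma eq_zero_of_mem_degreeRLE_of_neg (hd : d < 0) (hf : f ∈ degreeRLE n d) : f = 0 := by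
  have hbot : degreeRLE n d = ⊥ :=
    Submodule.span_eq_bot.mpr fun _ ⟨_, _, _, _, hi, _⟩ => by omega
  rwa [hbot, Submodule.mem_bot] at hf

lemma contDiff_of_mem_degreeRLE (hf : f ∈ degreeRLE n d) : ContDiff ℝ (⊤ : ℕ∞) f := by
  induction hf using Submodule.span_induction with
  | mem f hf =>
    obtain ⟨a, i, ha, -, -, rfl⟩ := hf
    fun_prop
  | zero => exact contDiff_const
  | add f h _ _ hf hh => exact hf.add hh
  | smul t f _ hf => exact contDiff_const.smul hf

lemma mul_mem_degreeRLE (hf : f ∈ degreeRLE n d) (hh : h ∈ degreeRLE n e) :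
    (fun x => f x * h x) ∈ degreeRLE n (d + e) := by
  have hmul := Submodule.mul_mem_mul hf hh
  rw [degreeRLE, degreeRLE, Submodule.span_mul_span] at hmul
  refine Submodule.span_mono ?_ hmul
  rintro _ ⟨_, ⟨a, i, ha, har, hi, rfl⟩, _, ⟨b, j, hb, hbr, hj, rfl⟩, rfl⟩
  refine ⟨fun x => a x * b x, i + j, ha.mul hb, fun x x' hxx' => ?_, by push_cast; omega, ?_⟩
  · simp only [har x x' hxx', hbr x x' hxx']
  · funext x
    simp only [Pi.mul_apply]
    ring

lemma sum_mem_degreeRLE {ι : Type*} {s : Finset ι} {F : ι → Pt n → ℝ}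
    (hF : ∀ i ∈ s, F i ∈ degreeRLE n d) : (fun x => ∑ i ∈ s, F i x) ∈ degreeRLE n d := by
  simpa only [Finset.sum_fn] using Submodule.sum_mem _ hF

lemma prod_mem_degreeRLE {ι : Type*} {s : Finset ι} {D : ι → ℤ} {F : ι → Pt n → ℝ}
    (hF : ∀ i ∈ s, F i ∈ degreeRLE n (D i)) :
    (fun x => ∏ i ∈ s, F i x) ∈ degreeRLE n (∑ i ∈ s, D i) := by
  classical
  induction s using Finset.induction_on with
  | empty => exact const_mem_degreeRLE 1 le_rfl
  | insert i s hi ih =>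
    simp only [Finset.prod_insert hi, Finset.sum_insert hi]
    exact mul_mem_degreeRLE (hF i (Finset.mem_insert_self i s))
      (ih fun j hj => hF j (Finset.mem_insert_of_mem hj))

lemma pd_mul_pow_mem_degreeRLE {a : Pt n → ℝ} {i : ℕ} (ha : ContDiff ℝ (⊤ : ℕ∞) a)
    (hr : IndepOfR a) (hi : (i : ℤ) ≤ d) (b : Fin n) :
    (fun x => pd (fun y => a y * y 1 ^ i) b x) ∈ degreeRLE n (d + indexBw b) := by
  have hpd : ∀ x : Pt n, pd (fun y => a y * y 1 ^ i) b x =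
      pd a b x * x 1 ^ i + (i : ℝ) * a x * x 1 ^ (i - 1) * (if 1 = b then 1 else 0) := fun x => by
    rw [pd_mul ((ha.differentiable (by simp)) x) (by fun_prop),
      pd_comp (φ := fun t => t ^ i) (by fun_prop) (by fun_prop), pd_coord, deriv_pow_field]
    ring
  simp only [hpd]
  by_cases hb : 1 = b
  · subst hb
    have hone : indexBw (1 : Fin n) = -1 := by
      simp only [indexBw, val_one_of_atLeastTwo, one_ne_zero, if_false, if_true]
    simp only [pd_eq_zero_of_indepOfR hr val_one_of_atLeastTwo, hone, if_true, zero_mul, zero_add,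
      mul_one]
    obtain rfl | hpos := i.eq_zero_or_pos
    · simpa using zero_mem_degreeRLE
    · exact mul_pow_mem_degreeRLE (contDiff_const.mul ha)
        (fun x x' hxx' => by simp only [hr x x' hxx']) (by omega)
  · have hnonneg : 0 ≤ indexBw b := by
      have hval : (b : ℕ) ≠ 1 := fun h => hb (Fin.ext (val_one_of_atLeastTwo.trans h.symm))
      simp only [indexBw, hval, if_false]
      split_ifs <;> norm_num
    simp only [hb, if_false, mul_zero, add_zero]
    exact mul_pow_mem_degreeRLE (contDiff_pd ha b) (hr.pd b) (by omega)

lemma pd_mem_degreeRLE (hf : f ∈ degreeRLE n d) (b : Fin n) :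
    (fun x => pd f b x) ∈ degreeRLE n (d + indexBw b) := by
  have hdiff : ∀ {f : Pt n → ℝ}, f ∈ degreeRLE n d → Differentiable ℝ f := fun hf =>
    (contDiff_of_mem_degreeRLE hf).differentiable (by simp)
  induction hf using Submodule.span_induction with
  | mem f hf =>
    obtain ⟨a, i, ha, hr, hi, rfl⟩ := hf
    exact pd_mul_pow_mem_degreeRLE ha hr hi b
  | zero => simpa [pd] using zero_mem_degreeRLE
  | add f h hf hh ihf ihh =>
    have hadd := funext fun x => pd_add (hdiff hf x) (hdiff hh x) b
    exact hadd ▸ Submodule.add_mem _ ihf ihh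
  | smul t f _ ihf => exact (funext (pd_const_mul t f b)) ▸ Submodule.smul_mem _ t ihf

end DegreeInR

/-! ### Balanced tensors -/

section BoostWeight

variable {n k : ℕ}

lemma bw_eq_sum_indexBw (idx : Fin k → Fin n) : bw idx = ∑ m, indexBw (idx m) := by
  simp only [bw, Finset.card_filter, Nat.cast_sum, ← Finset.sum_sub_distrib, indexBw]
  refine Finset.sum_congr rfl fun m _ => ?_
  split_ifs <;> simp_all

lemma bw_eq_add_bw_succAbove (idx : Fin (k + 1) → Fin n) (m : Fin (k + 1)) :
    bw idx = indexBw (idx m) + bw fun i => idx (m.succAbove i) := by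
  simp only [bw_eq_sum_indexBw, Fin.sum_univ_succAbove _ m]

lemma bw_eq_add_bw_succ (idx : Fin (k + 1) → Fin n) :
    bw idx = indexBw (idx 0) + bw fun i => idx i.succ := by
  simpa only [Fin.zero_succAbove] using bw_eq_add_bw_succAbove idx 0

lemma bw_update (idx : Fin k → Fin n) (m : Fin k) (e : Fin n) :
    bw (Function.update idx m e) = bw idx - indexBw (idx m) + indexBw e := by
  have hsum := Finset.sum_update_of_mem (Finset.mem_univ m) (fun i => indexBw (idx i)) (indexBw e)
  have hcomp : (fun i => indexBw (Function.update idx m e i)) =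
      Function.update (fun i => indexBw (idx i)) m (indexBw e) :=
    Function.comp_update indexBw idx m e
  rw [bw_eq_sum_indexBw, bw_eq_sum_indexBw, hcomp, hsum,
    ← Finset.add_sum_erase _ _ (Finset.mem_univ m), Finset.sdiff_singleton_eq_erase]
  ring

lemma bw_le_one_of_injective {idx : Fin k → Fin n} (hidx : Function.Injective idx) :
    bw idx ≤ 1 := by
  have hcard : (Finset.univ.filter fun m => (idx m : ℕ) = 0).card ≤ 1 :=
    Finset.card_le_one.mpr fun i hi j hj =>
      hidx (Fin.ext ((Finset.mem_filter.mp hi).2.trans (Finset.mem_filter.mp hj).2.symm))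
  unfold bw
  omega

lemma ConcomScheme.sum_bw_slots {r : ℕ} (S : ConcomScheme k r) (φ : Fin S.m × Bool → Fin n)
    (free : Fin r → Fin n) :
    ∑ j, bw (fun p => Sum.elim φ free (S.slots.symm ⟨j, p⟩)) =
      ∑ i, (indexBw (φ (i, false)) + indexBw (φ (i, true))) + bw free := by
  simp only [bw_eq_sum_indexBw]
  rw [← Fintype.sum_sigma' fun j p => indexBw (Sum.elim φ free (S.slots.symm ⟨j, p⟩)),
    Equiv.sum_comp S.slots.symm fun p => indexBw (Sum.elim φ free p), Fintype.sum_sum_type,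
    Fintype.sum_prod_type]
  simp only [Sum.elim_inl, Sum.elim_inr, Fintype.sum_bool, add_comm]

end BoostWeight

section Balanced

variable {n k : ℕ} [n.AtLeastTwo] {s t : ℤ} {g : MetricField n} {T : TensorField n k}

/-- The covariant tensor fields of order at least `s` in the boost-weight filtration: a coordinate
component whose indices have total weight `w` is a polynomial in `r` of degree at most `w - s`.
Coordinate weights are opposite to frame boost weights, so for `s = 1` these are the balanced
tensors of Pravda, Pravdová, Coley and Milson, and for general `s` the `(s - 1)`-balanced ones. -/
def balanced (n k : ℕ) [n.AtLeastTwo] (s : ℤ) : Submodule ℝ (TensorField n k) where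
  carrier := {T | ∀ idx, (fun x => T x idx) ∈ degreeRLE n (bw idx - s)}
  add_mem' hT hT' idx := Submodule.add_mem _ (hT idx) (hT' idx)
  zero_mem' _ := Submodule.zero_mem _
  smul_mem' t _ hT idx := Submodule.smul_mem _ t (hT idx)

/-- A metric both of whose component matrices, covariant and contravariant, have order `0` in the
boost-weight filtration. -/
structure IsBalancedMetric (g : MetricField n) : Prop where
  mem : ∀ a b, (fun x => g x a b) ∈ degreeRLE n (indexBw a + indexBw b)
  inv_mem : ∀ a b, (fun x => (g x)⁻¹ a b) ∈ degreeRLE n (-indexBw a - indexBw b)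

lemma balanced_anti (hst : s ≤ t) : balanced n k t ≤ balanced n k s :=
  fun _ hT idx => degreeRLE_mono (by omega) (hT idx)

lemma apply_eq_zero_of_mem_balanced (hT : T ∈ balanced n k s) {idx : Fin k → Fin n}
    (hidx : bw idx < s) (x : Pt n) : T x idx = 0 :=
  congrFun (eq_zero_of_mem_degreeRLE_of_neg (by omega) (hT idx)) x

lemma IsBalancedMetric.christoffel_mem (hg : IsBalancedMetric g) (a b c : Fin n) :
    (fun x => christoffel g x a b c) ∈ degreeRLE n (indexBw b + indexBw c - indexBw a) := by
  refine Submodule.smul_mem _ (1 / 2 : ℝ) (sum_mem_degreeRLE (F := fun d x => (g x)⁻¹ a d *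
    (pd (fun y => g y d c) b x + pd (fun y => g y b d) c x - pd (fun y => g y b c) d x))
      fun d _ => ?_)
  refine degreeRLE_mono ?_ (mul_mem_degreeRLE (e := indexBw b + indexBw c + indexBw d)
    (hg.inv_mem a d) (Submodule.sub_mem _ (Submodule.add_mem _ ?_ ?_) ?_))
  · omega
  · exact degreeRLE_mono (by omega) (pd_mem_degreeRLE (hg.mem d c) b)
  · exact degreeRLE_mono (by omega) (pd_mem_degreeRLE (hg.mem b d) c)
  · exact degreeRLE_mono (by omega) (pd_mem_degreeRLE (hg.mem b c) d)

lemma IsBalancedMetric.covD_mem (hg : IsBalancedMetric g) (hT : T ∈ balanced n k s) :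
    covD g T ∈ balanced n (k + 1) s := by
  intro idx
  have hbw := bw_eq_add_bw_succ idx
  refine Submodule.sub_mem _ ?_ (sum_mem_degreeRLE fun m _ => sum_mem_degreeRLE fun e _ => ?_)
  · exact degreeRLE_mono (by omega) (pd_mem_degreeRLE (hT _) _)
  · have hupdate := bw_update (fun m' => idx m'.succ) m e
    exact degreeRLE_mono (by omega) (mul_mem_degreeRLE (hg.christoffel_mem _ _ _) (hT _))

lemma IsBalancedMetric.covDIter_mem (hg : IsBalancedMetric g) (hT : T ∈ balanced n k s) (I : ℕ) :
    covDIter g T I ∈ balanced n (k + I) s := by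
  induction I with
  | zero => exact hT
  | succ I ih => exact hg.covD_mem ih

lemma IsBalancedMetric.covDIter_succ_mem (hg : IsBalancedMetric g)
    (hT : covD g T ∈ balanced n (k + 1) s) (I : ℕ) :
    covDIter g T (I + 1) ∈ balanced n (k + (I + 1)) s := by
  induction I with
  | zero => exact hT
  | succ I ih => exact hg.covD_mem ih

lemma IsBalancedMetric.value_mem (hg : IsBalancedMetric g) {r : ℕ} (S : ConcomScheme k r)
    {o : Fin S.N → ℤ} (hT : ∀ j, covDIter g T (S.ord j) ∈ balanced n (k + S.ord j) (o j)) :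
    S.value g T ∈ balanced n r (∑ j, o j) := by
  intro free
  refine sum_mem_degreeRLE fun φ _ => degreeRLE_mono ?_ (mul_mem_degreeRLE
    (prod_mem_degreeRLE fun i _ => hg.inv_mem (φ (i, false)) (φ (i, true)))
    (prod_mem_degreeRLE fun j _ => hT j _))
  have hslots := S.sum_bw_slots φ free
  simp only [Finset.sum_sub_distrib, Finset.sum_neg_distrib, Finset.sum_add_distrib] at hslots ⊢
  omega

theorem IsBalancedMetric.isVSI (hg : IsBalancedMetric g) (hT : T ∈ balanced n k 1) :
    IsVSI g T := by
  intro _ S _ x v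
  have hvalue := hg.value_mem S (o := fun _ => 1) fun j => hg.covDIter_mem hT (S.ord j)
  refine apply_eq_zero_of_mem_balanced hvalue ?_ x
  simpa [bw] using S.hN

end Balanced

section Universality

variable {n k : ℕ} {T G : TensorField n k}

lemma IsAlternating.apply_eq_zero_of_not_injective (hT : IsAlternating T) (x : Pt n)
    {idx : Fin k → Fin n} (hidx : ¬Function.Injective idx) : T x idx = 0 := by
  obtain ⟨i, j, hij, hne⟩ : ∃ i j, idx i = idx j ∧ i ≠ j := by
    simpa [Function.Injective] using hidx
  have hswap : idx ∘ Equiv.swap i j = idx := by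
    rw [Equiv.comp_swap_eq_update, hij, Function.update_eq_self, ← hij, Function.update_eq_self]
  have hneg := hT x idx (Equiv.swap i j)
  rw [hswap, Equiv.Perm.sign_swap hne] at hneg
  push_cast at hneg
  linarith

lemma IsAlternating.sub_smul (hG : IsAlternating G) (hT : IsAlternating T) (t : ℝ) :
    IsAlternating (G - t • T) := by
  intro x idx σ
  simp only [Pi.sub_apply, Pi.smul_apply, smul_eq_mul, hG x idx σ, hT x idx σ]
  ring

lemma IsAlternating.value_mem_span_singleton (hT : IsAlternating T) (g : MetricField n)
    (S : ConcomScheme k k) (hN : S.N = 1) (hord : ∀ j, S.ord j = 0) :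
    S.value g T ∈ Submodule.span ℝ {T} := by
  obtain ⟨N, hN', ord, m, slots⟩ := S
  subst hN
  obtain rfl : ord = fun _ => 0 := funext hord
  obtain rfl : m = 0 := by
    have hcard := Fintype.card_congr slots
    simp at hcard
    omega
  let σ : Equiv.Perm (Fin k) := (Equiv.uniqueSigma fun _ : Fin 1 => Fin (k + 0)).symm.trans
    (slots.symm.trans (Equiv.emptySum (Fin 0 × Bool) (Fin k)))
  have hσ (s : Fin k) : slots.symm ⟨0, s⟩ = Sum.inr (σ s) :=
    ((Equiv.emptySum (Fin 0 × Bool) (Fin k)).symm_apply_apply (slots.symm ⟨0, s⟩)).symm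
  refine Submodule.mem_span_singleton.mpr ⟨((Equiv.Perm.sign σ : ℤ) : ℝ), ?_⟩
  funext x free
  have hslot (φ : Fin 0 × Bool → Fin n) :
      (fun s : Fin k => Sum.elim φ free (slots.symm ⟨0, s⟩)) = free ∘ σ :=
    funext fun s => by rw [hσ]; rfl
  have hvalue : ConcomScheme.value ⟨1, hN', fun _ => 0, 0, slots⟩ g T x free = T x (free ∘ σ) := by
    simp only [ConcomScheme.value, Fintype.sum_unique, Finset.univ_eq_empty, Finset.prod_empty,
      one_mul, Fin.prod_univ_one]
    exact congrArg (T x) (hslot _)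
  rw [hvalue, hT x free σ]
  rfl

variable [n.AtLeastTwo] {g : MetricField n}

lemma IsAlternating.eq_zero_of_mem_balanced_two (hG : IsAlternating G) (hbal : G ∈ balanced n k 2) :
    G = 0 := by
  funext x idx
  by_cases hidx : Function.Injective idx
  · exact apply_eq_zero_of_mem_balanced hbal (by linarith [bw_le_one_of_injective hidx]) x
  · exact hG.apply_eq_zero_of_not_injective x hidx

lemma IsBalancedMetric.value_mem_balanced_two (hg : IsBalancedMetric g) (hT : T ∈ balanced n k 1)
    (hdT : covD g T ∈ balanced n (k + 1) 2) {r : ℕ} (S : ConcomScheme k r)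
    (hS : S.N = 1 → ∃ j, S.ord j ≠ 0) : S.value g T ∈ balanced n r 2 := by
  have hpos := S.hN
  let o : Fin S.N → ℤ := fun j => if S.ord j = 0 then 1 else 2
  have hone (j : Fin S.N) : 1 ≤ o j := by
    simp only [o]
    split_ifs <;> norm_num
  have hcovD (j : Fin S.N) : covDIter g T (S.ord j) ∈ balanced n (k + S.ord j) (o j) := by
    simp only [o]
    rcases S.ord j with _ | I
    · exact hT
    · exact hg.covDIter_succ_mem hdT I
  refine balanced_anti ?_ (hg.value_mem S hcovD)
  by_cases hN : S.N = 1
  · obtain ⟨j, hj⟩ := hS hN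
    calc (2 : ℤ) = o j := by simp [o, hj]
      _ ≤ ∑ j, o j := Finset.single_le_sum (fun i _ => by linarith [hone i]) (Finset.mem_univ j)
  · calc (2 : ℤ) ≤ ∑ _j : Fin S.N, (1 : ℤ) := by simp; omega
      _ ≤ ∑ j, o j := Finset.sum_le_sum fun j _ => hone j

theorem IsBalancedMetric.exists_eq_smul_of_isConstructedFrom (hg : IsBalancedMetric g)
    (hT : T ∈ balanced n k 1) (hdT : covD g T ∈ balanced n (k + 1) 2) (hTalt : IsAlternating T)
    (hG : IsConstructedFrom g T G) (hGalt : IsAlternating G) : ∃ t : ℝ, G = t • T := by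
  have hsup : G ∈ Submodule.span ℝ {T} ⊔ balanced n k 2 := by
    refine Submodule.span_le.mpr ?_ hG
    rintro _ ⟨S, rfl⟩
    by_cases hS : S.N = 1 → ∃ j, S.ord j ≠ 0
    · exact Submodule.mem_sup_right (hg.value_mem_balanced_two hT hdT S hS)
    · push Not at hS
      exact Submodule.mem_sup_left (hTalt.value_mem_span_singleton g S hS.1 hS.2)
  obtain ⟨_, ht, R, hR, rfl⟩ := Submodule.mem_sup.mp hsup
  obtain ⟨t, rfl⟩ := Submodule.mem_span_singleton.mp ht
  have hRalt : IsAlternating R := by simpa using hGalt.sub_smul hTalt t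
  exact ⟨t, by rw [hRalt.eq_zero_of_mem_balanced_two hR, add_zero]⟩

end Universality

/-! ### Two-forms `du ∧ B` -/

section DuWedge

lemma covD_oneForm_apply {n : ℕ} (g : MetricField n) (B : Pt n → Fin n → ℝ) (x : Pt n)
    (i k : Fin n) :
    covD g (oneForm B) x ![i, k] =
      pd (fun y => B y k) i x - ∑ e, christoffel g x e i k * B x e := by
  simp [covD, oneForm]

variable {n : ℕ} [n.AtLeastTwo] {g : MetricField n} {B : Pt n → Fin n → ℝ}

lemma duWedge_mem_balanced {q : ℕ} {s : ℤ} {f : TensorField n q} (hf : f ∈ balanced n q s) :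
    duWedge f ∈ balanced n (q + 1) (s + 1) := by
  intro idx
  refine sum_mem_degreeRLE fun m _ => ?_
  by_cases hm : (idx m : ℕ) = 0
  · have hbw := bw_eq_add_bw_succAbove idx m
    have hone : indexBw (idx m) = 1 := by simp only [indexBw, hm, if_true]
    exact degreeRLE_mono (by omega)
      (mul_mem_degreeRLE (d := 0) (const_mem_degreeRLE _ le_rfl) (hf fun i => idx (m.succAbove i)))
  · simpa only [hm, if_false, mul_zero, zero_mul] using zero_mem_degreeRLE

lemma oneForm_mem_balanced_zero (hB : ∀ a, ContDiff ℝ (⊤ : ℕ∞) fun x => B x a)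
    (hr : ∀ a, IndepOfR fun x => B x a) (hone : ∀ x, B x 1 = 0) :
    oneForm B ∈ balanced n 1 0 := by
  intro idx
  by_cases hidx : idx 0 = 1
  · simpa only [oneForm, hidx, hone] using zero_mem_degreeRLE
  · refine (hr (idx 0)).mem_degreeRLE (hB (idx 0)) ?_
    have hval : (idx 0 : ℕ) ≠ 1 := fun h => hidx (Fin.ext (h.trans val_one_of_atLeastTwo.symm))
    rw [bw_eq_sum_indexBw, Fin.sum_univ_one, indexBw, if_neg hval]
    split_ifs <;> norm_num

lemma duWedge_oneForm_apply (B : Pt n → Fin n → ℝ) (x : Pt n) (idx : Fin 2 → Fin n) :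
    duWedge (oneForm B) x idx =
      (if idx 0 = 0 then B x (idx 1) else 0) - (if idx 1 = 0 then B x (idx 0) else 0) := by
  simp [duWedge, oneForm, Fin.sum_univ_two, Fin.succAbove, Fin.val_eq_zero_iff, sub_eq_add_neg]
  split_ifs <;> simp

lemma raiseAll_duWedge_oneForm (g : MetricField n) (B : Pt n → Fin n → ℝ) (x : Pt n)
    (i j : Fin n) :
    raiseAll g (duWedge (oneForm B)) x ![i, j] =
      (g x)⁻¹ i 0 * ∑ e, (g x)⁻¹ j e * B x e - (g x)⁻¹ j 0 * ∑ e, (g x)⁻¹ i e * B x e := by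
  rw [raiseAll, ← (finTwoArrowEquiv (Fin n)).symm.sum_comp, Fintype.sum_prod_type]
  simp [duWedge_oneForm_apply, mul_sub, Finset.sum_sub_distrib, Finset.mul_sum, mul_assoc,
    mul_left_comm ((g x)⁻¹ j 0)]

lemma isAlternating_duWedge_oneForm (B : Pt n → Fin n → ℝ) :
    IsAlternating (duWedge (oneForm B)) := by
  intro x idx σ
  have hperm : ∀ σ : Equiv.Perm (Fin 2), σ = 1 ∨ σ = Equiv.swap 0 1 := by decide
  obtain rfl | rfl := hperm σ <;> simp [duWedge_oneForm_apply]

lemma extD_duWedge_oneForm_eq_zero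
    (hB : ∀ a b, a ≠ 0 → b ≠ 0 → ∀ x, pd (fun y => B y b) a x = pd (fun y => B y a) b x)
    (x : Pt n) (idx : Fin 3 → Fin n) : extD (duWedge (oneForm B)) x idx = 0 := by
  have hext : extD (duWedge (oneForm B)) x idx =
      pd (fun y => duWedge (oneForm B) y ![idx 1, idx 2]) (idx 0) x
      - pd (fun y => duWedge (oneForm B) y ![idx 0, idx 2]) (idx 1) x
      + pd (fun y => duWedge (oneForm B) y ![idx 0, idx 1]) (idx 2) x := by
    have hface (m : Fin 3) : (fun i : Fin 2 => idx (m.succAbove i)) =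
        ![idx (m.succAbove 0), idx (m.succAbove 1)] := by
      ext i
      fin_cases i <;> rfl
    simp only [extD, hface, Nat.reduceAdd, Fin.sum_univ_three]
    simp [Fin.succAbove, sub_eq_add_neg]
  rw [hext]
  simp only [duWedge_oneForm_apply, Matrix.cons_val_zero, Matrix.cons_val_one]
  generalize idx 0 = i, idx 1 = j, idx 2 = k
  by_cases hi : i = 0 <;> by_cases hj : j = 0 <;> by_cases hk : k = 0 <;>
    simp [hi, hj, hk, pd_const, pd_neg]
  · linarith [hB j k hj hk x]
  · linarith [hB i k hi hk x]
  · linarith [hB i j hi hj x]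

/-- The Leibniz rule for `du ∧ B`, in which `-christoffel g x 0 i j` is the component
`∇_i (du)_j`. -/
lemma covD_duWedge_oneForm_apply (g : MetricField n) (B : Pt n → Fin n → ℝ) (x : Pt n)
    (i j k : Fin n) :
    covD g (duWedge (oneForm B)) x ![i, j, k] =
      (if j = 0 then covD g (oneForm B) x ![i, k] else 0)
      - (if k = 0 then covD g (oneForm B) x ![i, j] else 0)
      - christoffel g x 0 i j * B x k + christoffel g x 0 i k * B x j := by
  have hcovD : covD g (duWedge (oneForm B)) x ![i, j, k] =
      pd (fun y => (if j = 0 then B y k else 0) - (if k = 0 then B y j else 0)) i x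
      - (∑ e, christoffel g x e i j * ((if e = 0 then B x k else 0) - (if k = 0 then B x e else 0))
        + ∑ e, christoffel g x e i k *
          ((if j = 0 then B x e else 0) - (if e = 0 then B x j else 0))) := by
    simp [covD, duWedge_oneForm_apply, Fin.sum_univ_two]
  rw [hcovD]
  simp only [covD_oneForm_apply, mul_sub, Finset.sum_sub_distrib]
  by_cases hj : j = 0 <;> by_cases hk : k = 0 <;> simp [hj, hk, pd_const, pd_neg] <;> ring

/-- Here `hdu` says that `∇du` has order `2`. -/
lemma covD_duWedge_oneForm_mem_balanced
    (hdu : ∀ i j, (fun x => christoffel g x 0 i j) ∈ degreeRLE n (indexBw i + indexBw j - 2))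
    (hB : oneForm B ∈ balanced n 1 0)
    (hdB : ∀ i k, k ≠ 0 →
      (fun x => covD g (oneForm B) x ![i, k]) ∈ degreeRLE n (indexBw i + indexBw k - 1)) :
    covD g (duWedge (oneForm B)) ∈ balanced n 3 2 := by
  have hone : indexBw (0 : Fin n) = 1 := by simp [indexBw]
  have hduB (i j k : Fin n) : (fun x => christoffel g x 0 i j * B x k) ∈
      degreeRLE n (indexBw i + indexBw j + indexBw k - 2) := by
    have hBk : (fun x => B x k) ∈ degreeRLE n (indexBw k) := by
      simpa [bw_eq_sum_indexBw, oneForm] using hB ![k]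
    exact degreeRLE_mono (by omega) (mul_mem_degreeRLE (hdu i j) hBk)
  have hwedge {j k : Fin n} (hjk : j ≠ k) (i : Fin n) :
      (fun x => if j = 0 then covD g (oneForm B) x ![i, k] else 0) ∈
        degreeRLE n (indexBw i + indexBw j + indexBw k - 2) := by
    by_cases hj : j = 0
    · simp only [hj, if_true, hone]
      exact degreeRLE_mono (by omega) (hdB i k fun hk => hjk (hj.trans hk.symm))
    · simpa only [hj, if_false] using zero_mem_degreeRLE
  intro idx
  obtain ⟨i, j, k, rfl⟩ : ∃ i j k, idx = ![i, j, k] :=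
    ⟨idx 0, idx 1, idx 2, by ext m; fin_cases m <;> rfl⟩
  have hbw : bw ![i, j, k] = indexBw i + indexBw j + indexBw k := by
    simp [bw_eq_sum_indexBw, Fin.sum_univ_three]
  simp only [covD_duWedge_oneForm_apply, hbw]
  by_cases hjk : j = k
  · simpa [hjk] using zero_mem_degreeRLE
  · refine Submodule.add_mem _ (Submodule.sub_mem _ (Submodule.sub_mem _ ?_ ?_) (hduB i j k)) ?_
    · exact hwedge hjk i
    · exact degreeRLE_mono (by omega) (hwedge (Ne.symm hjk) i)
    · exact degreeRLE_mono (by omega) (hduB i k j)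

end DuWedge

/-! ### Permutation signs -/

lemma permSign_eq_prod {k : ℕ} (f : Fin k → Fin k) :
    permSign f = ∏ j, ∏ i ∈ Finset.Iio j, Int.sign ((f j : ℤ) - f i) := by
  by_cases hf : Function.Bijective f
  · rw [permSign, dif_pos hf, Equiv.Perm.sign_eq_prod_prod_Iio]
    push_cast
    refine Finset.prod_congr rfl fun j _ => Finset.prod_congr rfl fun i hi => ?_
    have hne : f i ≠ f j := hf.injective.ne (Finset.mem_Iio.mp hi).ne
    rw [Equiv.ofBijective_apply, Equiv.ofBijective_apply]
    split_ifs with hlt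
    · simp [Int.sign_eq_one_of_pos (show 0 < (f j : ℤ) - f i by omega)]
    · simp [Int.sign_eq_neg_one_of_neg (show (f j : ℤ) - f i < 0 by omega)]
  · have hinj : ¬Function.Injective f := fun h => hf (Finite.injective_iff_bijective.mp h)
    obtain ⟨i, j, hij, hlt⟩ : ∃ i j, f i = f j ∧ i < j := by
      obtain ⟨i, j, hij, hne⟩ := Function.not_injective_iff.mp hinj
      obtain hlt | hlt := hne.lt_or_gt
      exacts [⟨i, j, hij, hlt⟩, ⟨j, i, hij.symm, hlt⟩]
    rw [permSign, dif_neg hf, Finset.prod_eq_zero (Finset.mem_univ j)]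
    exact Finset.prod_eq_zero (Finset.mem_Iio.mpr hlt) (by simp [hij])

lemma permSign_append_pair (h : 2 + 2 = 4) (i j k l : Fin 4) :
    permSign (fun m => Fin.append ![i, j] ![k, l] (Fin.cast h.symm m)) =
      Int.sign ((j : ℤ) - i) * (Int.sign ((k : ℤ) - i) * Int.sign ((k : ℤ) - j)) *
        (Int.sign ((l : ℤ) - i) * (Int.sign ((l : ℤ) - j) * Int.sign ((l : ℤ) - k))) := by
  have hzero : Finset.Iio (0 : Fin 4) = ∅ := by decide
  have hone : Finset.Iio (1 : Fin 4) = {0} := by decide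
  have htwo : Finset.Iio (2 : Fin 4) = {0, 1} := by decide
  have hthree : Finset.Iio (3 : Fin 4) = {0, 1, 2} := by decide
  simp [permSign_eq_prod, Fin.prod_univ_four, hzero, hone, htwo, hthree]
  rfl

/-! ### The Petrov metric -/

section PetrovMetric

lemma petrovG_eq (x : Pt 4) : petrovG x =
    !![x 2 * x 1 - x 2 * Real.exp (x 2), 1, 0, 0;
       1, 0, 0, 0;
       0, 0, Real.exp (x 2), 0;
       0, 0, 0, Real.exp (x 2 + 2 * x 0)] := by
  ext a b
  fin_cases a <;> fin_cases b <;> simp [petrovG]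

lemma petrovG_inv (x : Pt 4) : (petrovG x)⁻¹ =
    !![0, 1, 0, 0;
       1, x 2 * Real.exp (x 2) - x 2 * x 1, 0, 0;
       0, 0, Real.exp (-x 2), 0;
       0, 0, 0, Real.exp (-(x 2 + 2 * x 0))] := by
  refine Matrix.inv_eq_right_inv ?_
  rw [petrovG_eq]
  ext a b
  fin_cases a <;> fin_cases b <;>
    simp [Matrix.mul_apply, Fin.sum_univ_four, ← Real.exp_add, -neg_add_rev]

lemma sqrt_abs_det_petrovG (x : Pt 4) : √|(petrovG x).det| = Real.exp (x 2 + x 0) := by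
  have hdet : (petrovG x).det = -Real.exp (x 2 + x 0) ^ 2 := by
    rw [petrovG_eq, ← Real.exp_nat_mul]
    simp [Matrix.det_succ_row_zero, Fin.sum_univ_succ, Fin.succAbove, ← Real.exp_add]
    ring
  rw [hdet, abs_neg, abs_of_nonneg (by positivity), Real.sqrt_sq (by positivity)]

lemma isBalancedMetric_petrovG : IsBalancedMetric petrovG := by
  have htrans {f : ℝ → ℝ → ℝ} (hf : ContDiff ℝ (⊤ : ℕ∞) fun x : Pt 4 => f (x 0) (x 2)) :
      (fun x : Pt 4 => f (x 0) (x 2)) ∈ degreeRLE 4 0 := by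
    refine IndepOfR.mem_degreeRLE (fun x x' hxx' => ?_) hf le_rfl
    rw [hxx' 0 (by decide), hxx' 2 (by decide)]
  have huu : (fun x : Pt 4 => x 2 * x 1 - x 2 * Real.exp (x 2)) ∈ degreeRLE 4 2 := by
    refine Submodule.sub_mem _ ?_ (degreeRLE_mono (by norm_num)
      (htrans (f := fun _ t => t * Real.exp t) (by fun_prop)))
    simpa using mul_pow_mem_degreeRLE (n := 4) (d := 2) (a := fun x => x 2) (i := 1)
      (by fun_prop) (fun x x' hxx' => hxx' 2 (by decide)) (by norm_num)
  have hrr : (fun x : Pt 4 => x 2 * Real.exp (x 2) - x 2 * x 1) ∈ degreeRLE 4 2 := by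
    simpa [Pi.neg_def] using Submodule.neg_mem _ huu
  have hone : (fun _ : Pt 4 => (1 : ℝ)) ∈ degreeRLE 4 0 := const_mem_degreeRLE 1 le_rfl
  constructor <;> intro a b
  · have hxx := htrans (f := fun _ t => Real.exp t) (by fun_prop)
    have hyy := htrans (f := fun s t => Real.exp (t + 2 * s)) (by fun_prop)
    simp only [petrovG_eq]
    fin_cases a <;> fin_cases b <;> simp [indexBw, huu, hxx, hyy, hone, zero_mem_degreeRLE]
  · have hxx := htrans (f := fun _ t => Real.exp (-t)) (by fun_prop)
    have hyy := htrans (f := fun s t => Real.exp (-(t + 2 * s))) (by fun_prop)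
    simp only [petrovG_inv]
    fin_cases a <;> fin_cases b <;>
      simp [indexBw, hrr, hxx, hyy, hone, zero_mem_degreeRLE, -neg_add_rev]

lemma pd_petrovG (a b d : Fin 4) (x : Pt 4) : pd (fun y => petrovG y a b) d x =
    Matrix.diagonal (![![0, 0, 0, 2 * Real.exp (x 2 + 2 * x 0)],
      ![x 2, 0, 0, 0],
      ![x 1 - (1 + x 2) * Real.exp (x 2), 0, Real.exp (x 2), Real.exp (x 2 + 2 * x 0)],
      ![0, 0, 0, 0]] d) a b := by
  simp only [petrovG_eq]
  fin_cases a <;> fin_cases b <;> fin_cases d <;>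
    simp (disch := fun_prop) [Matrix.diagonal_apply, pd_sub, pd_add, pd_mul, pd_exp, pd_coord,
      pd_const] <;>
    ring

lemma christoffel_petrovG_zero (x : Pt 4) (b c : Fin 4) : christoffel petrovG x 0 b c =
    if b = 0 ∧ c = 0 then -(x 2 / 2) else 0 := by
  simp only [christoffel, petrovG_inv, pd_petrovG]
  fin_cases b <;> fin_cases c <;> simp [Fin.sum_univ_four]
  ring

lemma christoffel_petrovG_two (x : Pt 4) (b : Fin 4) {c : Fin 4} (hc : c ≠ 0) :
    christoffel petrovG x 2 b c =
      if b = 2 ∧ c = 2 then 1 / 2 else if b = 3 ∧ c = 3 then -(Real.exp (2 * x 0) / 2) else 0 := by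
  simp only [christoffel, petrovG_inv, pd_petrovG]
  fin_cases b <;> fin_cases c <;>
    simp [Fin.sum_univ_four, mul_add, ← Real.exp_add] at hc ⊢
  ring_nf

lemma christoffel_petrovG_three (x : Pt 4) (b : Fin 4) {c : Fin 4} (hc : c ≠ 0) :
    christoffel petrovG x 3 b c =
      if (b = 2 ∧ c = 3) ∨ (b = 3 ∧ c = 2) then 1 / 2 else if b = 0 ∧ c = 3 then 1 else 0 := by
  simp only [christoffel, petrovG_inv, pd_petrovG]
  fin_cases b <;> fin_cases c <;>
    simp [Fin.sum_univ_four, mul_add, mul_left_comm _ (Real.exp _), ← Real.exp_add] at hc ⊢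

end PetrovMetric

/-! ### The Petrov Maxwell field -/

section PetrovField

variable {c : ℝ → ℝ}

lemma contDiff_petrovA (hc : ContDiff ℝ (⊤ : ℕ∞) c) (a : Fin 4) :
    ContDiff ℝ (⊤ : ℕ∞) fun x => petrovA c x a := by
  unfold petrovA
  split_ifs <;> fun_prop

lemma indepOfR_petrovA (c : ℝ → ℝ) (a : Fin 4) : IndepOfR fun x => petrovA c x a := by
  intro x x' hxx'
  simp only [petrovA, hxx' 0 (by decide), hxx' 2 (by decide), hxx' 3 (by decide)]

lemma petrovA_zero (c : ℝ → ℝ) (x : Pt 4) : petrovA c x 0 = 0 := rfl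

lemma petrovA_one (c : ℝ → ℝ) (x : Pt 4) : petrovA c x 1 = 0 := rfl

lemma pd_petrovA_one (c : ℝ → ℝ) (a : Fin 4) (x : Pt 4) : pd (fun y => petrovA c y a) 1 x = 0 :=
  pd_eq_zero_of_indepOfR (indepOfR_petrovA c a) rfl x

lemma pd_petrovA_two (hc : Differentiable ℝ c) (a : Fin 4) (x : Pt 4) :
    pd (fun y => petrovA c y a) 2 x = petrovA c x a / 2 := by
  fin_cases a <;>
    simp (disch := fun_prop) [petrovA, pd_neg, pd_mul, pd_exp, pd_cos, pd_sin, pd_div_const,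
      pd_coord, pd_const, pd_comp (hc _)] <;> ring

lemma pd_petrovA_three (hc : Differentiable ℝ c) (a : Fin 4) (x : Pt 4) :
    pd (fun y => petrovA c y a) 3 x =
      ![0, 0, petrovA c x 3 / 2, -(Real.exp (2 * x 0) * petrovA c x 2) / 2] a := by
  have hexp : Real.exp (2 * x 0) = Real.exp (x 0) * Real.exp (x 0) := by
    rw [two_mul, Real.exp_add]
  fin_cases a <;>
    simp (disch := fun_prop) [petrovA, pd_neg, pd_mul, pd_exp, pd_cos, pd_sin, pd_div_const,
      pd_coord, pd_const, pd_comp (hc _), hexp] <;> ring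

lemma petrovF_eq_duWedge (c : ℝ → ℝ) : petrovF c = duWedge (oneForm (petrovA c)) := by
  funext x idx
  rw [duWedge_oneForm_apply, petrovF]

lemma petrovF_const_mul (t : ℝ) (c : ℝ → ℝ) : petrovF (fun u => t * c u) = t • petrovF c := by
  funext x idx
  simp only [petrovF, petrovA, Pi.smul_apply, smul_eq_mul]
  split_ifs <;> ring

lemma covD_oneForm_petrovA (hc : Differentiable ℝ c) (x : Pt 4) (i : Fin 4) {k : Fin 4}
    (hk : k ≠ 0) :
    covD petrovG (oneForm (petrovA c)) x ![i, k] =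
      if i = 0 then pd (fun y => petrovA c y k) 0 x - (if k = 3 then petrovA c x 3 else 0)
      else 0 := by
  rw [covD_oneForm_apply, Fin.sum_univ_four, petrovA_zero, petrovA_one,
    christoffel_petrovG_two x i hk, christoffel_petrovG_three x i hk]
  fin_cases i
  · simp
  · simp [pd_petrovA_one]
  · fin_cases k <;> simp [pd_petrovA_two hc, petrovA_one, pd_const] at hk ⊢ <;> ring
  · fin_cases k <;> simp [pd_petrovA_three hc] at hk ⊢ <;> ring

lemma oneForm_petrovA_mem_balanced (hc : ContDiff ℝ (⊤ : ℕ∞) c) :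
    oneForm (petrovA c) ∈ balanced 4 1 0 :=
  oneForm_mem_balanced_zero (contDiff_petrovA hc) (indepOfR_petrovA c) fun _ => rfl

lemma petrovF_mem_balanced (hc : ContDiff ℝ (⊤ : ℕ∞) c) : petrovF c ∈ balanced 4 2 1 :=
  petrovF_eq_duWedge c ▸ balanced_anti (by norm_num)
    (duWedge_mem_balanced (oneForm_petrovA_mem_balanced hc))

lemma covD_petrovF_mem_balanced (hc : ContDiff ℝ (⊤ : ℕ∞) c) :
    covD petrovG (petrovF c) ∈ balanced 4 3 2 := by
  rw [petrovF_eq_duWedge]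
  refine covD_duWedge_oneForm_mem_balanced (fun i j => ?_) (oneForm_petrovA_mem_balanced hc)
    fun i k hk => ?_
  · simp only [christoffel_petrovG_zero]
    split_ifs with hij
    · rw [hij.1, hij.2]
      exact IndepOfR.mem_degreeRLE (fun x x' hxx' => by rw [hxx' 2 (by decide)]) (by fun_prop)
        (by simp [indexBw])
    · exact zero_mem_degreeRLE
  · have hA (a : Fin 4) : (fun x => petrovA c x a) ∈ degreeRLE 4 0 :=
      (indepOfR_petrovA c a).mem_degreeRLE (contDiff_petrovA hc a) le_rfl
    have hduA : (fun x => pd (fun y => petrovA c y k) 0 x) ∈ degreeRLE 4 0 :=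
      ((indepOfR_petrovA c k).pd 0).mem_degreeRLE (contDiff_pd (contDiff_petrovA hc k) 0) le_rfl
    simp only [covD_oneForm_petrovA (hc.differentiable (by simp)) _ i hk]
    obtain rfl | hk1 := eq_or_ne k 1
    · simpa [petrovA_one, pd_const] using zero_mem_degreeRLE
    by_cases hi : i = 0
    · have hweight : 0 ≤ indexBw i + indexBw k - 1 := by
        fin_cases k <;> simp_all [indexBw]
      simp only [hi, if_true] at hweight ⊢
      refine degreeRLE_mono hweight (Submodule.sub_mem _ hduA ?_)
      split_ifs
      exacts [hA 3, zero_mem_degreeRLE]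
    · simpa only [hi, if_false] using zero_mem_degreeRLE

lemma extD_petrovF (hc : Differentiable ℝ c) (x : Pt 4) (idx : Fin 3 → Fin 4) :
    extD (petrovF c) x idx = 0 := by
  rw [petrovF_eq_duWedge]
  refine extD_duWedge_oneForm_eq_zero (fun a b ha hb x => ?_) x idx
  fin_cases a <;> fin_cases b <;>
    simp [pd_petrovA_one, pd_petrovA_two hc, pd_petrovA_three hc, petrovA_one,
      pd_const] at ha hb ⊢

/-- The covector `⋆B` with `*(du ∧ B) = du ∧ ⋆B` for the Petrov metric: up to sign, the Hodge dual
in the transverse metric `eˣ(dx² + e^{2u} dy²)`. -/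
def petrovDual (B : Pt 4 → Fin 4 → ℝ) (x : Pt 4) : Fin 4 → ℝ :=
  ![0, 0, -(Real.exp (-x 0) * B x 3), Real.exp (x 0) * B x 2]

lemma hodge_duWedge_oneForm (h : 2 + 2 = 4) {B : Pt 4 → Fin 4 → ℝ} (hone : ∀ x, B x 1 = 0) :
    hodge h petrovG (duWedge (oneForm B)) = duWedge (oneForm (petrovDual B)) := by
  funext x idx
  obtain ⟨k, l, rfl⟩ : ∃ k l, idx = ![k, l] := ⟨idx 0, idx 1, by ext m; fin_cases m <;> rfl⟩
  rw [hodge, ← (finTwoArrowEquiv (Fin 4)).symm.sum_comp, Fintype.sum_prod_type]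
  simp only [finTwoArrowEquiv_symm_apply, raiseAll_duWedge_oneForm, sqrt_abs_det_petrovG,
    permSign_append_pair, petrovG_inv, duWedge_oneForm_apply]
  have htwo : Int.sign 2 = 1 := rfl
  have hthree : Int.sign 3 = 1 := rfl
  have hxx : Real.exp (-x 2) * Real.exp (x 2 + x 0) = Real.exp (x 0) := by
    rw [← Real.exp_add, neg_add_cancel_left]
  have hyy : Real.exp (-(x 2 + 2 * x 0)) * Real.exp (x 2 + x 0) = Real.exp (-x 0) := by
    rw [← Real.exp_add]
    ring_nf
  fin_cases k <;> fin_cases l <;>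
    simp [Fin.sum_univ_four, hone, petrovDual, htwo, hthree, ← hxx, ← hyy, -neg_add_rev] <;>
    ring

lemma extD_hodge_petrovF (h : 2 + 2 = 4) (hc : ContDiff ℝ (⊤ : ℕ∞) c) (x : Pt 4)
    (idx : Fin 3 → Fin 4) : extD (hodge h petrovG (petrovF c)) x idx = 0 := by
  have hdc : Differentiable ℝ c := hc.differentiable (by simp)
  have hdA (a : Fin 4) : Differentiable ℝ fun x => petrovA c x a :=
    (contDiff_petrovA hc a).differentiable (by simp)
  rw [petrovF_eq_duWedge, hodge_duWedge_oneForm h fun _ => rfl]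
  refine extD_duWedge_oneForm_eq_zero (fun a b ha hb x => ?_) x idx
  have hexp : Real.exp (-x 0) * Real.exp (2 * x 0) = Real.exp (x 0) := by
    rw [← Real.exp_add]
    ring_nf
  fin_cases a <;> fin_cases b <;>
    simp (disch := fun_prop) [petrovDual, pd_neg, pd_mul, pd_exp, pd_coord, pd_const,
      pd_petrovA_one, pd_petrovA_two hdc, pd_petrovA_three hdc, ← hexp] at ha hb ⊢ <;>
    ring

end PetrovField

/-- the 2-form `F = e^{x/2} c(u) du ∧ (−cos(y eᵘ/2) dx + eᵘ sin(y eᵘ/2) dy)`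
solves the source-free Maxwell equations on the Petrov type III vacuum background, is
VSI, and is universal (it solves `dF = 0`, `d*F̃ = 0` for any 2-form `F̃` constructed
from `F` and its covariant derivatives). -/
theorem petrov_maxwell_universal (c : ℝ → ℝ) (hc : ContDiff ℝ (⊤ : ℕ∞) c) :
    MaxwellEqs (by norm_num : 2 + 2 = 4) petrovG (petrovF c) ∧
    IsVSI petrovG (petrovF c) ∧
    (∀ G : TensorField 4 2, IsConstructedFrom petrovG (petrovF c) G → IsAlternating G →
      ∀ x idx, extD (hodge (by norm_num : 2 + 2 = 4) petrovG G) x idx = 0) := by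
  have hF := petrovF_mem_balanced hc
  have hDF := covD_petrovF_mem_balanced hc
  have hFalt : IsAlternating (petrovF c) :=
    petrovF_eq_duWedge c ▸ isAlternating_duWedge_oneForm (petrovA c)
  refine ⟨⟨extD_petrovF (hc.differentiable (by simp)), extD_hodge_petrovF _ hc⟩,
    isBalancedMetric_petrovG.isVSI hF, fun G hG hGalt => ?_⟩
  obtain ⟨t, rfl⟩ :=
    isBalancedMetric_petrovG.exists_eq_smul_of_isConstructedFrom hF hDF hFalt hG hGalt
  rw [← petrovF_const_mul]
  exact extD_hodge_petrovF _ (contDiff_const.mul hc)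

end VSI
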